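/- arXiv:1901.01825 — 8 statements merged into one kernel-verified Lean document; each statement's English description precedes it below -/
import Mathlib

section
/- Let m and t be natural numbers with m ≥ 1, and fix a target index j ∈ Fin m. Under the uniform probability distribution on the finite set of all functions g : Fin t → Fin m (modeling t independent, uniformly random hash evaluations into a filter of m bits), the probability of the event that j does not lie in the range of g equals (1 - 1/m)^t. -/
/-- Under the uniform distribution on all functions `g : Fin t → Fin m` (t independent
uniform hash evaluations into m bits), the probability that a fixed bit `j` is not in the
range of `g` equals `(1 - 1/m)^t`. -/
theorem bloom_bit_not_set_prob (m t : ℕ) (hm : 1 ≤ m) (j : Fin m) :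
    ((Finset.univ.filter (fun g : Fin t → Fin m => ¬ ∃ i, g i = j)).card : ℝ) /
      (Fintype.card (Fin t → Fin m) : ℝ) = (1 - 1 / (m : ℝ)) ^ t := by
  have h : (Finset.univ.filter (fun g : Fin t → Fin m => ¬ ∃ i, g i = j))
      = Fintype.piFinset (fun _ : Fin t => Finset.univ.erase j) := by
    ext g
    simp [Fintype.mem_piFinset]
  have hm0 : (m : ℝ) ≠ 0 := by
    have : m ≠ 0 := by omega
    exact_mod_cast this
  rw [h, Fintype.card_piFinset_const, Finset.card_erase_of_mem (Finset.mem_univ j)]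
  simp only [Finset.card_univ, Fintype.card_fin, Fintype.card_fun]
  push_cast [Nat.cast_sub hm]
  rw [← div_pow, sub_div, div_self hm0]
end

section
/- Let m and t be natural numbers with m ≥ 1, and fix a target index j ∈ Fin m. Under the uniform probability distribution on the finite set of all functions g : Fin t → Fin m (modeling t independent, uniformly random hash evaluations into a filter of m bits), the probability of the event that j lies in the range of g equals 1 - (1 - 1/m)^t. -/
/-- Under the uniform distribution on all functions `g : Fin t → Fin m` (t independent
uniform hash evaluations into m bits), the probability that a fixed bit `j` lies in the
range of `g` equals `1 - (1 - 1/m)^t`. -/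
theorem bloom_bit_set_prob (m t : ℕ) (hm : 1 ≤ m) (j : Fin m) :
    ((Finset.univ.filter (fun g : Fin t → Fin m => ∃ i, g i = j)).card : ℝ) /
      (Fintype.card (Fin t → Fin m) : ℝ) = 1 - (1 - 1 / (m : ℝ)) ^ t := by
  have hc : (Finset.univ.filter (fun g : Fin t → Fin m => ¬ ∃ i, g i = j)).card
      = (m - 1) ^ t := by
    have h : Finset.univ.filter (fun g : Fin t → Fin m => ¬ ∃ i, g i = j)
        = Fintype.piFinset (fun _ : Fin t => Finset.univ.erase j) := by
      ext g
      simp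
    rw [h, Fintype.card_piFinset]
    simp
  have hs := Finset.card_filter_add_card_filter_not (s := (Finset.univ : Finset (Fin t → Fin m)))
    (fun g : Fin t → Fin m => ∃ i, g i = j)
  rw [hc, Finset.card_univ] at hs
  have hcard : Fintype.card (Fin t → Fin m) = m ^ t := by simp
  rw [hcard] at hs ⊢
  have hs' := congrArg (Nat.cast : ℕ → ℝ) hs
  push_cast [Nat.cast_sub hm] at hs'
  have hm0 : (m : ℝ) ≠ 0 := by
    have : m ≠ 0 := by omega
    exact_mod_cast this
  have e : 1 - 1 / (m : ℝ) = ((m : ℝ) - 1) / m := by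
    field_simp
  have hp : (m : ℝ) ^ t ≠ 0 := pow_ne_zero _ hm0
  rw [e, div_pow, eq_sub_iff_add_eq, Nat.cast_pow, ← add_div, hs', div_self hp]
end

section
/- Let m, t, k be natural numbers with m ≥ 1, and fix targets j : Fin k → Fin m. Under the uniform probability distribution on the finite set of all functions g : Fin k → (Fin t → Fin m) (modeling k mutually independent families of t uniformly random hash evaluations each), the probability of the event that for every i ∈ Fin k the target j i lies in the range of g i equals (1 - (1 - 1/m)^t)^k. -/
theorem bloom_aux (m t : ℕ) (hm : 1 ≤ m) (c : Fin m) :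
    ((Finset.univ.filter (fun f : Fin t → Fin m => ∃ a, f a = c)).card : ℝ) =
      (m : ℝ) ^ t - ((m : ℝ) - 1) ^ t := by
  have h1 : (Finset.univ.filter (fun f : Fin t → Fin m => ¬ ∃ a, f a = c)) =
      Fintype.piFinset (fun _ : Fin t => Finset.univ.erase c) := by
    ext f
    simp
  have h2 := Finset.card_filter_add_card_filter_not (s := (Finset.univ : Finset (Fin t → Fin m)))
    (fun f : Fin t → Fin m => ∃ a, f a = c)
  rw [h1, Fintype.card_piFinset] at h2
  simp only [Finset.card_erase_of_mem (Finset.mem_univ c), Finset.card_univ, Fintype.card_fin,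
    Finset.prod_const, Fintype.card_fun] at h2
  have h3 := congrArg (Nat.cast : ℕ → ℝ) h2
  push_cast [Nat.cast_sub hm] at h3
  linarith

/-- Under the uniform distribution on all functions `g : Fin k → (Fin t → Fin m)`
(k mutually independent families of t uniform hash evaluations each), the probability
that for every `i` the target `j i` lies in the range of `g i` equals
`(1 - (1 - 1/m)^t)^k`. -/
theorem bloom_matrix_fp_prob (m t k : ℕ) (hm : 1 ≤ m) (j : Fin k → Fin m) :
    ((Finset.univ.filter
        (fun g : Fin k → (Fin t → Fin m) => ∀ i : Fin k, ∃ a, g i a = j i)).card : ℝ) /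
      (Fintype.card (Fin k → (Fin t → Fin m)) : ℝ) =
      (1 - (1 - 1 / (m : ℝ)) ^ t) ^ k := by
  have h1 : (Finset.univ.filter
        (fun g : Fin k → (Fin t → Fin m) => ∀ i : Fin k, ∃ a, g i a = j i)) =
      Fintype.piFinset (fun i : Fin k =>
        Finset.univ.filter (fun f : Fin t → Fin m => ∃ a, f a = j i)) := by
    ext f
    simp
  have hm0 : (m : ℝ) ≠ 0 := by
    have : m ≠ 0 := by omega
    exact_mod_cast this
  rw [h1, Fintype.card_piFinset, Nat.cast_prod]
  simp only [bloom_aux m t hm, Finset.prod_const, Finset.card_univ, Fintype.card_fin,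
    Fintype.card_fun, Nat.cast_pow]
  rw [← div_pow, sub_div, div_self (pow_ne_zero _ hm0), ← div_pow, sub_div, div_self hm0]
end

section
/- Let A be a finite type (the potential false-positive items for one label), let m, k, n be natural numbers with m ≥ 1, and fix targets j : Fin k → Fin m. Under the uniform probability distribution on the finite set of all functions h : A → Fin k → (Fin (n·k) → Fin m) (each item's column receiving k mutually independent families of n·k uniformly random hash evaluations, independently across items), the expected cardinality of the random set {e ∈ A | for every i ∈ Fin k, the target j i lies in the range of h e i} equals (card A) · (1 - (1 - 1/m)^{n·k})^k. -/
lemma bm_prod_sum {I X : Type*} [Fintype I] [DecidableEq I] [Fintype X] (F : I → X → ℝ) :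
    ∑ h : I → X, ∏ i, F i (h i) = ∏ i, ∑ x, F i x := by
  classical
  rw [Finset.prod_univ_sum, Fintype.piFinset_univ]

lemma bm_marg {I X : Type*} [Fintype I] [DecidableEq I] [Fintype X] [Nonempty X]
    (g : X → ℝ) (e : I) :
    ∑ h : I → X, (1 / (Fintype.card X : ℝ)) ^ Fintype.card I * g (h e)
      = (1 / (Fintype.card X : ℝ)) * ∑ x, g x := by
  have hc : (Fintype.card X : ℝ) ≠ 0 := by
    exact_mod_cast Fintype.card_ne_zero
  have h1 := bm_prod_sum (I := I) (X := X)
    (fun i x => (1 / (Fintype.card X : ℝ)) * (if i = e then g x else 1))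
  have h2 : ∀ h : I → X, ∏ i, ((1 / (Fintype.card X : ℝ)) * (if i = e then g (h i) else 1))
      = (1 / (Fintype.card X : ℝ)) ^ Fintype.card I * g (h e) := by
    intro h
    rw [Finset.prod_mul_distrib, Finset.prod_const, Finset.card_univ, Finset.prod_ite_eq']
    simp
  simp only [h2] at h1
  rw [h1, Finset.prod_eq_single e]
  · simp [Finset.mul_sum]
  · intro b _ hb
    simp [hb, hc]
  · simp

lemma bm_hit (N m : ℕ) (t : Fin m) :
    ∑ y : Fin N → Fin m, (if ∃ a, y a = t then (1 : ℝ) else 0)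
      = (m : ℝ) ^ N - ((m : ℝ) - 1) ^ N := by
  have h : ∀ y : Fin N → Fin m, (if ∃ a, y a = t then (1 : ℝ) else 0)
      = 1 - ∏ a, (1 - if y a = t then (1 : ℝ) else 0) := by
    intro y
    split_ifs with hy
    · obtain ⟨a, ha⟩ := hy
      rw [Finset.prod_eq_zero (Finset.mem_univ a) (by simp [ha])]
      simp
    · push Not at hy
      simp [hy]
  simp only [h]
  rw [Finset.sum_sub_distrib, bm_prod_sum (fun (_ : Fin N) x => 1 - if x = t then (1 : ℝ) else 0)]
  simp

/-- Under the uniform distribution on all functions `h : A → Fin k → (Fin (n·k) → Fin m)`,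
the expected number of items `e ∈ A` such that for every `i`, `j i` lies in the range of
`h e i` equals `|A| · (1 - (1 - 1/m)^{n·k})^k`. -/
theorem bloom_matrix_expected_fp (A : Type*) [Fintype A] [DecidableEq A] (m k n : ℕ) (hm : 1 ≤ m)
    (j : Fin k → Fin m) :
    ∑ h : A → Fin k → (Fin (n * k) → Fin m),
        (1 / (Fintype.card (A → Fin k → (Fin (n * k) → Fin m)) : ℝ)) *
          ((Finset.univ.filter (fun e : A => ∀ i : Fin k, ∃ a, h e i a = j i)).card : ℝ) =
      (Fintype.card A : ℝ) * (1 - (1 - 1 / (m : ℝ)) ^ (n * k)) ^ k := by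
  have hm0 : (m : ℝ) ≠ 0 := by
    have : m ≠ 0 := by omega
    exact_mod_cast this
  haveI : Nonempty (Fin m) := ⟨⟨0, hm⟩⟩
  have hcard : (1 / (Fintype.card (A → Fin k → (Fin (n * k) → Fin m)) : ℝ))
      = (1 / (Fintype.card (Fin k → (Fin (n * k) → Fin m)) : ℝ)) ^ Fintype.card A := by
    rw [Fintype.card_fun, Nat.cast_pow, one_div_pow]
  rw [hcard]
  simp only [Finset.card_filter, Nat.cast_sum, Nat.cast_ite, Nat.cast_one, Nat.cast_zero,
    Finset.mul_sum]
  rw [Finset.sum_comm]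
  have key : ∀ e : A, ∑ h : A → Fin k → (Fin (n * k) → Fin m),
      (1 / (Fintype.card (Fin k → (Fin (n * k) → Fin m)) : ℝ)) ^ Fintype.card A *
        (if ∀ i : Fin k, ∃ a, h e i a = j i then (1 : ℝ) else 0)
      = (1 - (1 - 1 / (m : ℝ)) ^ (n * k)) ^ k := by
    intro e
    rw [bm_marg (fun v : Fin k → (Fin (n * k) → Fin m) =>
      if ∀ i : Fin k, ∃ a, v i a = j i then (1 : ℝ) else 0) e]
    have h2 : ∀ v : Fin k → (Fin (n * k) → Fin m),
        (if ∀ i : Fin k, ∃ a, v i a = j i then (1 : ℝ) else 0)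
        = ∏ i, (if ∃ a, v i a = j i then (1 : ℝ) else 0) := by
      intro v
      rw [Finset.prod_ite_zero]
      simp
    simp only [h2]
    rw [bm_prod_sum (fun (i : Fin k) (y : Fin (n * k) → Fin m) =>
      if ∃ a, y a = j i then (1 : ℝ) else 0)]
    simp only [bm_hit, Finset.prod_const, Finset.card_univ, Fintype.card_fin, Fintype.card_fun,
      Nat.cast_pow]
    rw [← one_div_pow, ← mul_pow]
    congr 1
    have : (1 - 1 / (m : ℝ)) = ((m : ℝ) - 1) / m := by field_simp
    rw [this, div_pow]
    field_simp
  simp only [key]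
  simp
end

section
/- Let I be a finite type (the indices of the Bloom Filters touched by a label), let m, k, n : I → ℕ with m i ≥ 1 for all i, and fix targets j : (i : I) → Fin (k i) → Fin (m i). Under the uniform probability distribution on the finite set of all dependent functions g : (i : I) → Fin (k i) → (Fin (k i · n i) → Fin (m i)) (filter i receiving k i mutually independent families of k i · n i uniformly random hash evaluations, independently across filters), the expected cardinality of the random set {i ∈ I | for every a ∈ Fin (k i), the target j i a lies in the range of g i a} equals Σ_{i ∈ I} (1 - (1 - 1/(m i))^{k i · n i})^{k i}. -/
lemma bv_avg {I : Type*} [Fintype I] [DecidableEq I] (α : I → Type*) [∀ i, Fintype (α i)]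
    [∀ i, Nonempty (α i)] (i0 : I) (f : α i0 → ℝ) :
    ∑ g : (i : I) → α i, (1 / (Fintype.card ((i : I) → α i) : ℝ)) * f (g i0) =
      (1 / (Fintype.card (α i0) : ℝ)) * ∑ x, f x := by
  classical
  have key := Fintype.prod_sum (fun (i : I) (x : α i) =>
    (1 / (Fintype.card (α i) : ℝ)) * (if h : i = i0 then f (h ▸ x) else 1))
  rw [Finset.prod_eq_single i0] at key
  · simp only [dite_true, ← Finset.mul_sum] at key
    rw [key]
    refine Finset.sum_congr rfl fun g _ => ?_
    rw [Finset.prod_mul_distrib, Fintype.card_pi]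
    congr 1
    · simp
    · rw [Finset.prod_eq_single i0]
      · simp
      · intro b _ hb
        simp [hb]
      · simp
  · intro b _ hb
    have : (Fintype.card (α b) : ℝ) ≠ 0 := by exact_mod_cast Fintype.card_ne_zero
    simp [hb, this]
  · simp

lemma bv_one (N m : ℕ) (hm : 1 ≤ m) (t : Fin m) :
    ∑ u : Fin N → Fin m, (if ∃ b, u b = t then (1 : ℝ) else 0) =
      (m : ℝ) ^ N * (1 - (1 - 1 / (m : ℝ)) ^ N) := by
  have h0 : (m : ℝ) ≠ 0 := by positivity
  have h1 : ∀ u : Fin N → Fin m, (if ∃ b, u b = t then (1 : ℝ) else 0) =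
      1 - ∏ b, (if u b = t then (0 : ℝ) else 1) := by
    intro u
    split_ifs with h
    · obtain ⟨b, hb⟩ := h
      rw [Finset.prod_eq_zero (Finset.mem_univ b)] <;> simp [hb]
    · push Not at h
      simp [h]
  have h2 : ∑ x : Fin m, (if x = t then (0 : ℝ) else 1) = m - 1 := by
    have : ∀ x : Fin m, (if x = t then (0 : ℝ) else 1) = 1 - if x = t then 1 else 0 := by
      intro x; split_ifs <;> simp
    simp [this, Finset.sum_sub_distrib]
  simp only [h1]
  rw [Finset.sum_sub_distrib, ← Fintype.prod_sum (fun (_ : Fin N) (x : Fin m) =>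
    if x = t then (0 : ℝ) else 1)]
  simp only [h2]
  rw [mul_sub, ← mul_pow, mul_sub, mul_one_div_cancel h0]
  simp

lemma bv_filter (K N m : ℕ) (hm : 1 ≤ m) (t : Fin K → Fin m) :
    (1 / (Fintype.card (Fin K → Fin N → Fin m) : ℝ)) *
    ∑ u : Fin K → Fin N → Fin m, (if ∀ a, ∃ b, u a b = t a then (1 : ℝ) else 0) =
      (1 - (1 - 1 / (m : ℝ)) ^ N) ^ K := by
  have h0 : (m : ℝ) ≠ 0 := by positivity
  have h1 : ∀ u : Fin K → Fin N → Fin m, (if ∀ a, ∃ b, u a b = t a then (1 : ℝ) else 0) =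
      ∏ a, (if ∃ b, u a b = t a then (1 : ℝ) else 0) := by
    intro u
    split_ifs with h
    · simp [h]
    · push Not at h
      obtain ⟨a, ha⟩ := h
      rw [Finset.prod_eq_zero (Finset.mem_univ a)]
      simp [ha]
  simp only [h1]
  rw [← Fintype.prod_sum (fun (a : Fin K) (x : Fin N → Fin m) =>
    if ∃ b, x b = t a then (1 : ℝ) else 0)]
  simp only [bv_one N m hm]
  simp only [Finset.prod_const, Finset.card_univ, Fintype.card_fin, mul_pow, Fintype.card_fun]
  push_cast
  field_simp

/-- Bloom Vector expected number of false-positive filters: under the uniform distribution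
on dependent functions `g : (i : I) → Fin (k i) → (Fin (k i * n i) → Fin (m i))`, the
expected cardinality of `{i | ∀ a, j i a ∈ range (g i a)}` equals
`Σ_i (1 - (1 - 1/(m i))^{k i · n i})^{k i}`. -/
theorem bloom_vector_expected_fp (I : Type*) [Fintype I] [DecidableEq I]
    (m k n : I → ℕ) (hm : ∀ i, 1 ≤ m i)
    (j : (i : I) → Fin (k i) → Fin (m i)) :
    ∑ g : (i : I) → Fin (k i) → (Fin (k i * n i) → Fin (m i)),
        (1 / (Fintype.card ((i : I) → Fin (k i) → (Fin (k i * n i) → Fin (m i))) : ℝ)) *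
          ((Finset.univ.filter
              (fun i : I => ∀ a : Fin (k i), ∃ b, g i a b = j i a)).card : ℝ) =
      ∑ i : I, (1 - (1 - 1 / (m i : ℝ)) ^ (k i * n i)) ^ (k i) := by
  have : ∀ i, Nonempty (Fin (m i)) := fun i => ⟨⟨0, hm i⟩⟩
  simp only [Finset.card_filter, Nat.cast_sum, Finset.mul_sum]
  rw [Finset.sum_comm]
  refine Finset.sum_congr rfl fun i _ => ?_
  rw [← bv_filter (k i) (k i * n i) (m i) (hm i) (j i)]
  rw [← bv_avg (fun i => Fin (k i) → Fin (k i * n i) → Fin (m i)) i]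
  refine Finset.sum_congr rfl fun g _ => ?_
  push_cast
  rfl
end

section
/- Let n be a positive real number and let p be a real number with 0 < p < 1. Define m = -n · (ln p)/(ln 2)^2 and k = -(ln p)/(ln 2). Then m > 0, k > 0, k = (m/n) · ln 2, and (1 - exp(-(k·n)/m))^k = p. -/
/-- Choosing `m = -n ln p / ln² 2` and `k = -ln p / ln 2` gives `k = (m/n) ln 2` and
asymptotic false positive probability `(1 - e^{-kn/m})^k = p`. -/
theorem bloom_params_achieve_p (n p : ℝ) (hn : 0 < n) (hp0 : 0 < p) (hp1 : p < 1) :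
    let m : ℝ := -n * Real.log p / (Real.log 2) ^ 2
    let k : ℝ := -(Real.log p) / Real.log 2
    0 < m ∧ 0 < k ∧ k = (m / n) * Real.log 2 ∧
      (1 - Real.exp (-(k * n) / m)) ^ k = p := by
  intro m k
  have hl : Real.log p < 0 := Real.log_neg hp0 hp1
  have h2 : 0 < Real.log 2 := Real.log_pos (by norm_num)
  have hm : 0 < m := div_pos (by nlinarith) (by positivity)
  have hk : 0 < k := div_pos (by linarith) h2
  have hkm : k = (m / n) * Real.log 2 := by
    simp only [m, k]
    field_simp
  refine ⟨hm, hk, hkm, ?_⟩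
  have he : -(k * n) / m = -Real.log 2 := by
    rw [hkm]
    have := hm.ne'
    have := hn.ne'
    clear_value m
    field_simp
  rw [he, Real.exp_neg, Real.exp_log (by norm_num),
    Real.rpow_def_of_pos (by norm_num)]
  have h3 : (1 - (2:ℝ)⁻¹) = 2⁻¹ := by norm_num
  rw [h3, Real.log_inv]
  have h4 : -Real.log 2 * k = Real.log p := by
    simp only [k]
    field_simp
  rw [h4, Real.exp_log hp0]
end

section
/- Let L (labels) and E (items) be types, f : L → Finset E, m a natural number, and H : L → Finset (Fin m). Define for each row i : Fin m the set G i = ⋃ over labels l' with i ∈ H l' of (f l' : Set E), and define LOOKUP l = ⋂ over i ∈ H l of G i. Suppose the hash neighborhoods are collision-free, i.e., for all labels l₁ ≠ l₂ the sets H l₁ and H l₂ are disjoint. Then for every label l with H l nonempty, LOOKUP l = (f l : Set E); i.e., with collision-free hashing the Bloom Matrix lookup has no false positives. -/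
/-- With collision-free hash neighborhoods, Bloom Matrix lookup has no false positives:
`LOOKUP l = f l` for every label `l` with nonempty hash neighborhood. -/
theorem bloom_matrix_collision_free (L E : Type*) (f : L → Finset E) (m : ℕ)
    (H : L → Finset (Fin m))
    (hdisj : ∀ l₁ l₂ : L, l₁ ≠ l₂ → Disjoint (H l₁) (H l₂)) :
    let G : Fin m → Set E := fun i => ⋃ (l' : L) (_ : i ∈ H l'), (f l' : Set E)
    let LOOKUP : L → Set E := fun l => ⋂ i ∈ (H l : Set (Fin m)), G i
    ∀ l : L, (H l).Nonempty → LOOKUP l = (f l : Set E) := by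
  intro G LOOKUP l hl
  ext e
  simp only [LOOKUP, G, Set.mem_iInter, Set.mem_iUnion, Finset.mem_coe]
  constructor
  · intro h
    obtain ⟨i, hi⟩ := hl
    obtain ⟨l', hl', he⟩ := h i hi
    by_cases hne : l = l'
    · subst hne
      exact he
    · exact absurd hl' (Finset.disjoint_left.mp (hdisj l l' hne) hi)
  · intro he i hi
    exact ⟨l, hi, he⟩
end

section
/- Let L (labels) and E (items) be types, f : L → Finset E, let m : E → ℕ, and let H : (e : E) → L → Finset (Fin (m e)). Define the filter of item e as B e = ⋃ over labels l' with e ∈ f l' of (H e l' : Set (Fin (m e))), and define LOOKUP l = {e : E | (H e l : Set (Fin (m e))) ⊆ B e}. Suppose that for every item e the hash neighborhood H e l is nonempty for every label l, and the neighborhoods are collision-free within each filter, i.e., for all labels l₁ ≠ l₂ the sets H e l₁ and H e l₂ are disjoint. Then for every label l, LOOKUP l = (f l : Set E); i.e., with collision-free hashing the Bloom Vector lookup has no false positives. -/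
/-- With nonempty, collision-free hash neighborhoods in each per-item filter, Bloom Vector
lookup has no false positives: `LOOKUP l = f l` for every label `l`. -/
theorem bloom_vector_collision_free (L E : Type*) (f : L → Finset E) (m : E → ℕ)
    (H : (e : E) → L → Finset (Fin (m e)))
    (hne : ∀ (e : E) (l : L), (H e l).Nonempty)
    (hdisj : ∀ (e : E) (l₁ l₂ : L), l₁ ≠ l₂ → Disjoint (H e l₁) (H e l₂)) :
    let B : (e : E) → Set (Fin (m e)) := fun e =>
      ⋃ (l' : L) (_ : e ∈ f l'), (H e l' : Set (Fin (m e)))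
    let LOOKUP : L → Set E := fun l => {e : E | (H e l : Set (Fin (m e))) ⊆ B e}
    ∀ l : L, LOOKUP l = (f l : Set E) := by
  intro B LOOKUP l
  ext e
  constructor
  · intro h
    obtain ⟨x, hx⟩ := hne e l
    have hB : x ∈ ⋃ (l' : L) (_ : e ∈ f l'), (H e l' : Set (Fin (m e))) :=
      h (Finset.mem_coe.2 hx)
    obtain ⟨l', he, hx'⟩ := Set.mem_iUnion₂.1 hB
    by_cases hl : l = l'
    · subst hl
      exact Finset.mem_coe.2 he
    · exact absurd (Finset.mem_coe.1 hx') (Finset.disjoint_left.1 (hdisj e l l' hl) hx)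
  · intro he x hx
    exact Set.mem_iUnion₂.2 ⟨l, Finset.mem_coe.1 he, hx⟩
end
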